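/- Let β be a unital action of a finite groupoid 𝒢 on a ring R such that R is a β-Galois extension of R^β. If R^β is a separable extension of C(R)^β, then the skew groupoid ring R ⋆_β 𝒢 is a separable extension of C(R)^β. -/

import Mathlib

open CategoryTheory TensorProduct

/-- A unital action `β = ({E_g}, {β_g})` of a finite groupoid `𝒢` (objects `Obj`,
morphisms `a ⟶ b`) on a ring `R` with `R = ⊕_{e ∈ 𝒢₀} E_e`.  The unital ideals
`E_e` are encoded by their central, pairwise-orthogonal identity elements
`one e` summing to `1` (so `E_e = R·(one e)`), and `β_g : E_{g⁻¹} → E_g`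
(for `g : a ⟶ b`, i.e. `d(g) = a`, `r(g) = b`) is encoded by the map
`act g : R → R`, `x ↦ β_g(x·1_{g⁻¹})`. -/
structure GpdAction (Obj : Type) [Groupoid Obj] [Fintype Obj] (R : Type) [Ring R] where
  one : Obj → R
  one_central : ∀ (e : Obj) (r : R), one e * r = r * one e
  one_idem : ∀ e : Obj, one e * one e = one e
  one_orth : ∀ e f : Obj, e ≠ f → one e * one f = 0
  sum_one : ∑ e : Obj, one e = 1
  act : ∀ {a b : Obj}, (a ⟶ b) → R → R
  act_zero : ∀ {a b : Obj} (g : a ⟶ b), act g 0 = 0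
  act_add : ∀ {a b : Obj} (g : a ⟶ b) (x y : R), act g (x + y) = act g x + act g y
  act_neg : ∀ {a b : Obj} (g : a ⟶ b) (x : R), act g (-x) = -act g x
  act_mul : ∀ {a b : Obj} (g : a ⟶ b) (x y : R), act g (x * y) = act g x * act g y
  act_proj : ∀ {a b : Obj} (g : a ⟶ b) (x : R), act g (x * one a) = act g x
  act_mem : ∀ {a b : Obj} (g : a ⟶ b) (x : R), act g x * one b = act g x
  act_one : ∀ {a b : Obj} (g : a ⟶ b), act g (one a) = one b
  act_id : ∀ (e : Obj) (x : R), act (𝟙 e) x = x * one e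
  act_comp : ∀ {a b c : Obj} (g : a ⟶ b) (h : b ⟶ c) (x : R),
    act (g ≫ h) x = act h (act g x)
  act_inv : ∀ {a b : Obj} (g : a ⟶ b) (x : R), act (Groupoid.inv g) (act g x) = x * one a

/-- The set of morphisms of the groupoid, as a single type. -/
abbrev Mor (Obj : Type) [Groupoid Obj] : Type := Σ a b : Obj, a ⟶ b

variable {Obj : Type} [Groupoid Obj] [Fintype Obj] {R : Type} [Ring R]

/-- The subring of invariants `{r ∈ R ∣ β_g(r·1_{g⁻¹}) = r·1_g}` under all
morphisms `g` satisfying the predicate `P` (e.g. the morphisms of a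
subgroupoid, or all morphisms of `𝒢`). -/
def GpdAction.invSubring (β : GpdAction Obj R)
    (P : ∀ ⦃a b : Obj⦄, (a ⟶ b) → Prop) : Subring R where
  carrier := {r : R | ∀ ⦃a b : Obj⦄ (g : a ⟶ b), P g → β.act g r = r * β.one b}
  zero_mem' := by intro a b g _; rw [β.act_zero, zero_mul]
  one_mem' := by
    intro a b g _
    have h1 : β.act g (1 : R) = β.act g (β.one a) := by
      rw [← β.act_proj g 1, one_mul]
    rw [h1, β.act_one, one_mul]
  add_mem' := by
    intro x y hx hy a b g hg
    rw [β.act_add, hx g hg, hy g hg, add_mul]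
  neg_mem' := by
    intro x hx a b g hg
    rw [β.act_neg, hx g hg, neg_mul]
  mul_mem' := by
    intro x y hx hy a b g hg
    rw [β.act_mul, hx g hg, hy g hg, mul_assoc, β.one_central b (y * β.one b),
      mul_assoc, β.one_idem, ← mul_assoc]

/-- The invariants `R^β` under the whole groupoid. -/
def GpdAction.inv (β : GpdAction Obj R) : Subring R :=
  β.invSubring fun _ _ _ => True

/-- The invariants `R^{β_ℋ}` under a subgroupoid `ℋ`. -/
def GpdAction.invH (β : GpdAction Obj R) (H : Subgroupoid Obj) : Subring R :=
  β.invSubring fun _ _ g => g ∈ H.arrows _ _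

/-- `C(R)^β = C(R) ∩ R^β`. -/
def GpdAction.centerInv (β : GpdAction Obj R) : Subring R :=
  Subring.center R ⊓ β.inv

/-- `R` is a `β`-Galois extension of `R^β`: there is a Galois coordinate system
`x_i, y_i` with `Σ_i x_i·β_g(y_i·1_{g⁻¹}) = Σ_{e ∈ 𝒢₀} δ_{e,g}·1_e` for all `g`. -/
def GpdAction.IsGaloisExt (β : GpdAction Obj R) : Prop :=
  ∃ (n : ℕ) (x y : Fin n → R),
    (∀ e : Obj, ∑ i, x i * β.act (𝟙 e) (y i * β.one e) = β.one e) ∧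
    (∀ (a b : Obj) (g : a ⟶ b), ¬(∃ _ : a = b, HEq g (𝟙 a)) →
      ∑ i, x i * β.act g (y i * β.one a) = 0)

/-- `J_g = {r ∈ E_g ∣ r·β_g(x·1_{g⁻¹}) = x·r for all x ∈ R}`, for a morphism
`m = (a, b, g)`. -/
def GpdAction.J (β : GpdAction Obj R) (m : Mor Obj) : Set R :=
  {r : R | r * β.one m.2.1 = r ∧ ∀ x : R, r * β.act m.2.2 (x * β.one m.1) = x * r}

/-- `S_ℋ = {h ∈ ℋ ∣ J_h ≠ {0}}`, as a set of morphisms. -/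
def GpdAction.SArr (β : GpdAction Obj R) (H : Subgroupoid Obj) : Set (Mor Obj) :=
  {m : Mor Obj | m.2.2 ∈ H.arrows m.1 m.2.1 ∧ β.J m ≠ {0}}

/-- A ring extension `A ⊇ k` (with `k` commutative, mapping centrally into `A`)
is separable if there is a separability element `z ∈ A ⊗_k A` with
`μ(z) = 1` and `(a ⊗ 1) z = z (1 ⊗ a)` for all `a ∈ A`. -/
def IsSepExt (k A : Type) [CommRing k] [Ring A] [Algebra k A] : Prop :=
  ∃ z : A ⊗[k] A,
    LinearMap.mul' k A z = 1 ∧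
    ∀ a : A, ((a ⊗ₜ[k] (1 : A)) * z = z * ((1 : A) ⊗ₜ[k] a))

/-- A subring of a ring consisting of central elements is commutative. -/
def commRingOfCentral (R : Type) [Ring R] (k : Subring R)
    (h : ∀ x ∈ k, ∀ r : R, x * r = r * x) : CommRing k :=
  { (inferInstance : Ring k) with
    mul_comm := fun a b => Subtype.ext (h a.1 a.2 b.1) }

/-- `T` is a separable extension of `k`, for subrings `k ≤ T` of `R` with `k`
central in `R`. -/
def SepOver (R : Type) [Ring R] (k T : Subring R) : Prop :=
  ∃ (hc : ∀ x ∈ k, ∀ r : R, x * r = r * x) (hle : k ≤ T),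
    letI : CommRing k := commRingOfCentral R k hc
    letI : Algebra k T := RingHom.toAlgebra' (Subring.inclusion hle)
      (fun c x => Subtype.ext (hc c.1 c.2 x.1))
    IsSepExt k T

section Skew

variable [DecidableEq Obj] [∀ a b : Obj, Fintype (a ⟶ b)]
  [∀ a b : Obj, DecidableEq (a ⟶ b)]

/-- The skew groupoid ring `R ⋆_β 𝒢 = ⊕_{g ∈ 𝒢} E_g u_g`: families
`(x_g)_{g ∈ 𝒢}` with `x_g ∈ E_g = E_{r(g)}`. -/
def SkewRing (β : GpdAction Obj R) : Type :=
  {f : Mor Obj → R // ∀ m : Mor Obj, f m * β.one m.2.1 = f m}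

namespace SkewRing

variable {β : GpdAction Obj R}

instance : Add (SkewRing β) :=
  ⟨fun f g => ⟨fun m => f.1 m + g.1 m, fun m => by rw [add_mul, f.2 m, g.2 m]⟩⟩

instance : Zero (SkewRing β) := ⟨⟨fun _ => 0, fun m => by rw [zero_mul]⟩⟩

instance : Neg (SkewRing β) :=
  ⟨fun f => ⟨fun m => -f.1 m, fun m => by rw [neg_mul, f.2 m]⟩⟩

/-- Multiplication induced by `(x u_g)(y u_h) = x β_g(y 1_{g⁻¹}) u_{gh}` when
`d(g) = r(h)` (and `0` otherwise): the component at `k : a ⟶ c` is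
`Σ_{g : b ⟶ c} x_g β_g(y_{k ≫ g⁻¹} 1_{g⁻¹})`. -/
instance : Mul (SkewRing β) :=
  ⟨fun f f' =>
    ⟨fun m => ∑ b : Obj, ∑ g : b ⟶ m.2.1,
        f.1 ⟨b, m.2.1, g⟩ * β.act g (f'.1 ⟨m.1, b, m.2.2 ≫ Groupoid.inv g⟩),
      by
        intro m
        rw [Finset.sum_mul]
        refine Finset.sum_congr rfl fun b _ => ?_
        rw [Finset.sum_mul]
        refine Finset.sum_congr rfl fun g _ => ?_
        rw [mul_assoc, β.act_mem]⟩⟩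

/-- The "diagonal" element `Σ_{e ∈ 𝒢₀} (x·1_e) u_{id_e}` of the skew groupoid
ring associated with `x ∈ R`. -/
def diag (x : R) : SkewRing β :=
  ⟨fun m => if h : m.1 = m.2.1 then
      (if m.2.2 = (h ▸ 𝟙 m.1 : m.1 ⟶ m.2.1) then x * β.one m.1 else 0) else 0,
    by
      rintro ⟨a, b, g⟩
      by_cases h : a = b
      · subst h
        by_cases h' : g = 𝟙 a
        · simp [h', mul_assoc, β.one_idem]
        · simp [h']
      · simp [h]⟩

/-- The identity element `Σ_{e ∈ 𝒢₀} 1_e u_{id_e}`. -/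
instance : One (SkewRing β) := ⟨diag 1⟩

theorem coe_add (f g : SkewRing β) (m : Mor Obj) : (f + g).1 m = f.1 m + g.1 m := rfl

theorem coe_zero (m : Mor Obj) : (0 : SkewRing β).1 m = 0 := rfl

theorem diag_apply (x : R) (m : Mor Obj) :
    (diag (β := β) x).1 m = if h : m.1 = m.2.1 then
      (if m.2.2 = (h ▸ 𝟙 m.1 : m.1 ⟶ m.2.1) then x * β.one m.1 else 0) else 0 := rfl

theorem coe_mul (f f' : SkewRing β) (m : Mor Obj) :
    (f * f').1 m = ∑ b : Obj, ∑ g : b ⟶ m.2.1,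
      f.1 ⟨b, m.2.1, g⟩ * β.act g (f'.1 ⟨m.1, b, m.2.2 ≫ Groupoid.inv g⟩) := rfl

theorem diag_mul_apply (x : R) (f : SkewRing β) (m : Mor Obj) :
    (diag x * f).1 m = x * f.1 m := by
  rw [coe_mul]
  rw [Finset.sum_eq_single m.2.1]
  · rw [Finset.sum_eq_single (𝟙 m.2.1)]
    · have h1 : (diag (β := β) x).1 ⟨m.2.1, m.2.1, 𝟙 m.2.1⟩ = x * β.one m.2.1 := by
        simp [diag_apply]
      have h2 : (m.2.2 ≫ Groupoid.inv (𝟙 m.2.1) : m.1 ⟶ m.2.1) = m.2.2 := by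
        simp [Groupoid.inv_eq_inv]
      rw [h1, h2]
      have h3 : f.1 ⟨m.1, m.2.1, m.2.2⟩ = f.1 m := rfl
      have key : β.one m.2.1 * (f.1 m * β.one m.2.1) = f.1 m := by
        rw [f.2 m, β.one_central, f.2 m]
      rw [h3, β.act_id, mul_assoc, key]
    · intro g _ hg
      have h1 : (diag (β := β) x).1 ⟨m.2.1, m.2.1, g⟩ = 0 := by
        simp [diag_apply, hg]
      rw [h1, zero_mul]
    · intro h; exact absurd (Finset.mem_univ _) h
  · intro b _ hb
    refine Finset.sum_eq_zero fun g _ => ?_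
    have h1 : (diag (β := β) x).1 ⟨b, m.2.1, g⟩ = 0 := by
      rw [diag_apply]
      exact dif_neg hb
    rw [h1, zero_mul]
  · intro h; exact absurd (Finset.mem_univ _) h

theorem mul_diag_apply (f : SkewRing β) (x : R) (m : Mor Obj) :
    (f * diag x).1 m = f.1 m * β.act m.2.2 x := by
  rw [coe_mul]
  rw [Finset.sum_eq_single m.1]
  · rw [Finset.sum_eq_single m.2.2]
    · have h2 : (m.2.2 ≫ Groupoid.inv m.2.2 : m.1 ⟶ m.1) = 𝟙 m.1 :=
        Groupoid.comp_inv m.2.2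
      have h1 : (diag (β := β) x).1 ⟨m.1, m.1, m.2.2 ≫ Groupoid.inv m.2.2⟩
          = x * β.one m.1 := by
        simp [diag_apply, h2]
      rw [h1]
      have h3 : f.1 ⟨m.1, m.2.1, m.2.2⟩ = f.1 m := rfl
      rw [h3, β.act_proj]
    · intro g _ hg
      have h1 : (diag (β := β) x).1 ⟨m.1, m.1, m.2.2 ≫ Groupoid.inv g⟩ = 0 := by
        simp only [diag_apply]
        rw [dif_pos trivial]
        refine if_neg fun hEq => hg ?_
        have := congrArg (fun p => p ≫ g) hEq
        simp only [Category.assoc, Groupoid.inv_comp, Category.comp_id,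
          Category.id_comp] at this
        exact this.symm ▸ (by simp)
      rw [h1, β.act_zero, mul_zero]
    · intro h; exact absurd (Finset.mem_univ _) h
  · intro b _ hb
    refine Finset.sum_eq_zero fun g _ => ?_
    have h1 : (diag (β := β) x).1 ⟨m.1, b, m.2.2 ≫ Groupoid.inv g⟩ = 0 := by
      rw [diag_apply]
      exact dif_neg fun h => hb h.symm
    rw [h1, β.act_zero, mul_zero]
  · intro h; exact absurd (Finset.mem_univ _) h

noncomputable instance : Ring (SkewRing β) where
  add_assoc f g h := Subtype.ext (funext fun m => add_assoc _ _ _)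
  zero_add f := Subtype.ext (funext fun m => zero_add _)
  add_zero f := Subtype.ext (funext fun m => add_zero _)
  add_comm f g := Subtype.ext (funext fun m => add_comm _ _)
  neg_add_cancel f := Subtype.ext (funext fun m => neg_add_cancel _)
  nsmul := nsmulRec
  zsmul := zsmulRec
  left_distrib f g h := Subtype.ext (funext fun m => by
    simp only [coe_mul, coe_add, β.act_add, mul_add, Finset.sum_add_distrib])
  right_distrib f g h := Subtype.ext (funext fun m => by
    simp only [coe_mul, coe_add, add_mul, Finset.sum_add_distrib])
  zero_mul f := Subtype.ext (funext fun m => by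
    simp only [coe_mul, coe_zero, zero_mul, Finset.sum_const_zero])
  mul_zero f := Subtype.ext (funext fun m => by
    simp only [coe_mul, coe_zero, β.act_zero, mul_zero, Finset.sum_const_zero])
  mul_assoc f g h := Subtype.ext (funext fun m => by
    obtain ⟨a, d, k⟩ := m
    have act_sum : ∀ {x y : Obj} (gg : x ⟶ y) {ι : Type} (s : Finset ι) (F : ι → R),
        β.act gg (∑ i ∈ s, F i) = ∑ i ∈ s, β.act gg (F i) := by
      intro x y gg ι s F
      exact map_sum (AddMonoidHom.mk' (β.act gg) (β.act_add gg)) F s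
    simp only [coe_mul, act_sum, β.act_mul, Finset.sum_mul, Finset.mul_sum]
    have key : ∀ F : (b : Obj) → (b ⟶ d) → (c : Obj) → (c ⟶ d) → R,
        (∑ b : Obj, ∑ p : b ⟶ d, ∑ c : Obj, ∑ q : c ⟶ d, F b p c q) =
          ∑ c : Obj, ∑ q : c ⟶ d, ∑ b : Obj, ∑ p : b ⟶ d, F b p c q := by
      intro F
      calc (∑ b : Obj, ∑ p : b ⟶ d, ∑ c : Obj, ∑ q : c ⟶ d, F b p c q)
          = ∑ b : Obj, ∑ c : Obj, ∑ p : b ⟶ d, ∑ q : c ⟶ d, F b p c q :=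
            Finset.sum_congr rfl fun b _ => Finset.sum_comm
        _ = ∑ c : Obj, ∑ b : Obj, ∑ p : b ⟶ d, ∑ q : c ⟶ d, F b p c q :=
            Finset.sum_comm
        _ = ∑ c : Obj, ∑ b : Obj, ∑ q : c ⟶ d, ∑ p : b ⟶ d, F b p c q :=
            Finset.sum_congr rfl fun c _ => Finset.sum_congr rfl fun b _ =>
              Finset.sum_comm
        _ = ∑ c : Obj, ∑ q : c ⟶ d, ∑ b : Obj, ∑ p : b ⟶ d, F b p c q :=
            Finset.sum_congr rfl fun c _ => Finset.sum_comm
    rw [key]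
    refine Finset.sum_congr rfl fun c _ => Finset.sum_congr rfl fun q _ =>
      Finset.sum_congr rfl fun b _ => ?_
    refine (Fintype.sum_equiv (⟨fun r : b ⟶ c => r ≫ q, fun p => p ≫ Groupoid.inv q,
      fun r => by simp [Groupoid.inv_eq_inv], fun p => by simp [Groupoid.inv_eq_inv]⟩ :
        (b ⟶ c) ≃ (b ⟶ d)) _ _ fun r => ?_).symm
    show f.1 ⟨c, d, q⟩ * (β.act q (g.1 ⟨b, c, r⟩) *
        β.act q (β.act r (h.1 ⟨a, b, (k ≫ Groupoid.inv q) ≫ Groupoid.inv r⟩))) =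
      f.1 ⟨c, d, q⟩ * β.act q (g.1 ⟨b, c, (r ≫ q) ≫ Groupoid.inv q⟩) *
        β.act (r ≫ q) (h.1 ⟨a, b, k ≫ Groupoid.inv (r ≫ q)⟩)
    have h1 : (r ≫ q) ≫ Groupoid.inv q = r := by
      simp [Groupoid.inv_eq_inv]
    have h2 : (k ≫ Groupoid.inv (r ≫ q) : a ⟶ b) =
        (k ≫ Groupoid.inv q) ≫ Groupoid.inv r := by
      simp [Groupoid.inv_eq_inv]
    rw [h1, h2, β.act_comp, mul_assoc])
  one_mul f := Subtype.ext (funext fun m => by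
    show (diag 1 * f).1 m = f.1 m
    rw [diag_mul_apply, one_mul])
  mul_one f := Subtype.ext (funext fun m => by
    show (f * diag 1).1 m = f.1 m
    rw [mul_diag_apply]
    have h1 : β.act m.2.2 (1 : R) = β.one m.2.1 := by
      rw [← β.act_proj m.2.2 1, one_mul, β.act_one]
    rw [h1, f.2 m])

/-- The element `x u_{m₀}`, for `x ∈ E_{m₀}`. -/
noncomputable def single (m₀ : Mor Obj) (x : R) : SkewRing β :=
  ⟨fun m => if m = m₀ then x * β.one m₀.2.1 else 0,
    by
      intro m
      by_cases h : m = m₀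
      · subst h; simp [mul_assoc, β.one_idem]
      · simp [h]⟩

/-- The element `u_g` (i.e. `1_g u_g`). -/
noncomputable def u (m₀ : Mor Obj) : SkewRing β := single m₀ (β.one m₀.2.1)

end SkewRing

end Skew

section Stmt4

variable [DecidableEq Obj] [∀ a b : Obj, Fintype (a ⟶ b)]
  [∀ a b : Obj, DecidableEq (a ⟶ b)]

theorem GpdAction.mem_invSubring {β : GpdAction Obj R}
    {P : ∀ ⦃a b : Obj⦄, (a ⟶ b) → Prop} {r : R} :
    r ∈ β.invSubring P ↔
      ∀ ⦃a b : Obj⦄ (g : a ⟶ b), P g → β.act g r = r * β.one b :=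
  Iff.rfl

theorem SkewRing.diag_mul_diag {β : GpdAction Obj R} (x y : R) :
    (SkewRing.diag x : SkewRing β) * SkewRing.diag y = SkewRing.diag (x * y) := by
  refine Subtype.ext (funext fun m => ?_)
  rw [SkewRing.diag_mul_apply, SkewRing.diag_apply, SkewRing.diag_apply]
  by_cases h : m.1 = m.2.1
  · rw [dif_pos h, dif_pos h]
    split <;> simp [mul_assoc]
  · rw [dif_neg h, dif_neg h, mul_zero]

/-- The canonical embedding `C(R)^β → R ⋆_β 𝒢`, `c ↦ Σ_{e ∈ 𝒢₀} (c·1_e) u_{id_e}`. -/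
noncomputable def iotaC (β : GpdAction Obj R) : ↥β.centerInv →+* SkewRing β where
  toFun c := SkewRing.diag (c : R)
  map_one' := by
    show SkewRing.diag ((1 : ↥β.centerInv) : R) = SkewRing.diag 1
    norm_num
  map_mul' c d := by
    show SkewRing.diag ((c : R) * (d : R)) = _
    exact (SkewRing.diag_mul_diag _ _).symm
  map_zero' := by
    refine Subtype.ext (funext fun m => ?_)
    rw [SkewRing.diag_apply]
    show _ = (0 : SkewRing β).1 m
    rw [SkewRing.coe_zero]
    push_cast
    by_cases h : m.1 = m.2.1
    · rw [dif_pos h]; split <;> simp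
    · rw [dif_neg h]
  map_add' c d := by
    refine Subtype.ext (funext fun m => ?_)
    show _ = _ + _
    rw [SkewRing.diag_apply, SkewRing.diag_apply, SkewRing.diag_apply]
    push_cast
    by_cases h : m.1 = m.2.1
    · rw [dif_pos h, dif_pos h, dif_pos h]; split <;> simp [add_mul]
    · rw [dif_neg h, dif_neg h, dif_neg h, add_zero]

theorem iotaC_commute (β : GpdAction Obj R) (c : ↥β.centerInv)
    (f : SkewRing β) : iotaC β c * f = f * iotaC β c := by
  have hcen : (c : R) ∈ Subring.center R := (Subring.mem_inf.mp c.2).1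
  have hinv : (c : R) ∈ β.inv := (Subring.mem_inf.mp c.2).2
  refine Subtype.ext (funext fun m => ?_)
  show (SkewRing.diag (c : R) * f).1 m = (f * SkewRing.diag (c : R)).1 m
  rw [SkewRing.diag_mul_apply, SkewRing.mul_diag_apply,
    GpdAction.mem_invSubring.mp hinv m.2.2 trivial, ← mul_assoc,
    Subring.mem_center_iff.mp hcen (f.1 m), mul_assoc, f.2 m]

/-!
Evaluating at a separability element `∑ sᵢ ⊗ tᵢ` of `R^β` gives the Casimir operator
`x ↦ ∑ sᵢ x tᵢ`, a projection onto the center `Z` of `R^β`. It makes `R^β` an Azumaya `Z`-algebra: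
finite over `Z`, with `I ⊆ (I ∩ Z) R^β` for every two-sided ideal `I`. By Nakayama's lemma, a
finitely generated `I` with `I = I²` that is annihilated by no nonzero central element is all of
`R^β`.

Put `T = ∑ u_g`. The Galois coordinates satisfy `∑ xᵢ T yᵢ = 1` in `R ⋆_β 𝒢`, and
`T r T = tr(r) T` for `r ∈ R`. Hence `r = ∑ tr(r xᵢ) yᵢ`, so the image of the trace is an ideal of
the kind above, and some `c` has `tr(c) = 1`. Then `e = T c` is an idempotent, full because
`∑ xᵢ e (T yᵢ) = 1`, whose corner `e (R ⋆_β 𝒢) e` is isomorphic to `R^β`; separability passes from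
a full corner to the whole ring.
-/

/-- A separability element of a `k`-algebra `A`: a preimage of `1` under multiplication
`A ⊗[k] A → A` which is invariant for the outer bimodule structure; `z * (1 ⊗ₜ a)` is the right
action of `a` on the second factor. -/
structure IsSeparabilityElement {k A : Type*} [CommSemiring k] [Semiring A] [Algebra k A]
    (z : A ⊗[k] A) : Prop where
  mul'_eq_one : LinearMap.mul' k A z = 1
  tmul_one_mul : ∀ a : A, (a ⊗ₜ[k] 1) * z = z * (1 ⊗ₜ[k] a)

section Casimir

variable {k A B : Type*} [CommSemiring k] [Semiring A] [Algebra k A] [Semiring B] [Algebra k B]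

/-- The canonical identification of `A ⊗[k] A` with the enveloping algebra `A ⊗[k] Aᵐᵒᵖ`, on which
`AlgHom.mulLeftRight` represents the action on the bimodule `A`. -/
def toEnveloping : A ⊗[k] A →ₗ[k] A ⊗[k] Aᵐᵒᵖ :=
  LinearMap.lTensor A (MulOpposite.opLinearEquiv k : A ≃ₗ[k] Aᵐᵒᵖ).toLinearMap

/-- The Casimir operator `x ↦ ∑ sᵢ * x * tᵢ` of the tensor `∑ sᵢ ⊗ₜ tᵢ`. -/
def casimir : A ⊗[k] A →ₗ[k] Module.End k A :=
  (AlgHom.mulLeftRight k A).toLinearMap ∘ₗ toEnveloping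

theorem mulLeftRight_toEnveloping (z : A ⊗[k] A) :
    AlgHom.mulLeftRight k A (toEnveloping z) = casimir z := rfl

@[simp] theorem casimir_tmul (s t x : A) : casimir (s ⊗ₜ[k] t) x = s * x * t := by
  simp [casimir, toEnveloping]

theorem casimir_apply_of_mem_center (z : A ⊗[k] A) {c : A} (hc : c ∈ Subalgebra.center k A) :
    casimir z c = c * LinearMap.mul' k A z := by
  induction z with
  | zero => simp
  | tmul s t => simp [Subalgebra.mem_center_iff.mp hc s, mul_assoc]
  | add z w hz hw => simp only [map_add, LinearMap.add_apply, hz, hw, mul_add]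

theorem casimir_apply_one (z : A ⊗[k] A) : casimir z 1 = LinearMap.mul' k A z := by
  rw [casimir_apply_of_mem_center z (one_mem _), one_mul]

theorem casimir_tmul_one_mul (a x : A) (z : A ⊗[k] A) :
    casimir ((a ⊗ₜ 1) * z) x = a * casimir z x := by
  induction z with
  | zero => simp
  | tmul s t => simp [mul_assoc]
  | add z w hz hw => simp only [mul_add, map_add, LinearMap.add_apply, hz, hw]

theorem casimir_mul_one_tmul (a x : A) (z : A ⊗[k] A) :
    casimir (z * (1 ⊗ₜ a)) x = casimir z x * a := by
  induction z with
  | zero => simp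
  | tmul s t => simp [mul_assoc]
  | add z w hz hw => simp only [add_mul, map_add, LinearMap.add_apply, hz, hw]

theorem casimir_tensorTensorTensorComm (z : A ⊗[k] A) (w : B ⊗[k] B) (a : A) (b : B) :
    casimir (Algebra.TensorProduct.tensorTensorTensorComm k k k k A A B B (z ⊗ₜ w)) (a ⊗ₜ b) =
      casimir z a ⊗ₜ casimir w b := by
  induction z with
  | zero => simp
  | add z z' hz hz' => simp only [add_tmul, map_add, LinearMap.add_apply, hz, hz']
  | tmul s t =>
    induction w with
    | zero => simp
    | tmul u v => simp
    | add w w' hw hw' => simp only [tmul_add, map_add, LinearMap.add_apply, hw, hw']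

/-- The swap `s ⊗ₜ t ↦ op t ⊗ₜ op s`, an anti-isomorphism of `A ⊗[k] A` with
`Aᵐᵒᵖ ⊗[k] Aᵐᵒᵖ`. -/
def opComm : A ⊗[k] A →ₗ[k] Aᵐᵒᵖ ⊗[k] Aᵐᵒᵖ :=
  TensorProduct.map (MulOpposite.opLinearEquiv k).toLinearMap
    (MulOpposite.opLinearEquiv k).toLinearMap ∘ₗ (TensorProduct.comm k A A).toLinearMap

@[simp] theorem opComm_tmul (s t : A) :
    opComm (s ⊗ₜ[k] t) = MulOpposite.op t ⊗ₜ MulOpposite.op s := rfl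

theorem opComm_mul (z w : A ⊗[k] A) : opComm (z * w) = opComm w * opComm z := by
  induction z with
  | zero => simp
  | add z z' hz hz' => simp only [add_mul, map_add, hz, hz', mul_add]
  | tmul s t =>
    induction w with
    | zero => simp
    | add w w' hw hw' => simp only [mul_add, map_add, hw, hw', add_mul]
    | tmul u v => simp

theorem mul'_opComm (z : A ⊗[k] A) :
    LinearMap.mul' k Aᵐᵒᵖ (opComm z) = MulOpposite.op (LinearMap.mul' k A z) := by
  induction z with
  | zero => simp
  | tmul s t => simp
  | add z w hz hw => simp only [map_add, hz, hw, MulOpposite.op_add]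

namespace IsSeparabilityElement

variable {z : A ⊗[k] A} (hz : IsSeparabilityElement z)
include hz

theorem casimir_mem_center (x : A) : casimir z x ∈ Subalgebra.center k A :=
  Subalgebra.mem_center_iff.mpr fun a => by
    rw [← casimir_tmul_one_mul, hz.tmul_one_mul, casimir_mul_one_tmul]

theorem casimir_of_mem_center {c : A} (hc : c ∈ Subalgebra.center k A) : casimir z c = c := by
  rw [casimir_apply_of_mem_center z hc, hz.mul'_eq_one, mul_one]

theorem casimir_one : casimir z 1 = 1 :=
  (casimir_apply_one z).trans hz.mul'_eq_one

theorem exists_algebraMap_eq_casimir [Algebra.IsCentral k A] (x : A) :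
    ∃ c : k, algebraMap k A c = casimir z x :=
  Algebra.mem_bot.mp (Algebra.IsCentral.out (hz.casimir_mem_center x))

theorem tensor {w : B ⊗[k] B} (hw : IsSeparabilityElement w) :
    IsSeparabilityElement
      (Algebra.TensorProduct.tensorTensorTensorComm k k k k A A B B (z ⊗ₜ w)) where
  mul'_eq_one := by
    have h := LinearMap.congr_fun
      (TensorProduct.Algebra.mul'_comp_tensorTensorTensorComm (R := k) (A := A) (B := B)) (z ⊗ₜ w)
    rw [map_tmul, hz.mul'_eq_one, hw.mul'_eq_one] at h
    exact h
  tmul_one_mul x := by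
    induction x with
    | zero => simp
    | add x y hx hy => simp only [add_tmul, add_mul, hx, hy, tmul_add, mul_add]
    | tmul a b =>
      calc _ = Algebra.TensorProduct.tensorTensorTensorComm k k k k A A B B
              (((a ⊗ₜ 1) * z) ⊗ₜ ((b ⊗ₜ 1) * w)) := by
            rw [← Algebra.TensorProduct.tmul_mul_tmul, map_mul]
            rfl
        _ = _ := by
            rw [hz.tmul_one_mul, hw.tmul_one_mul, ← Algebra.TensorProduct.tmul_mul_tmul, map_mul]
            rfl

theorem isCentral_tensor [Algebra.IsCentral k A] [Algebra.IsCentral k B]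
    {w : B ⊗[k] B} (hw : IsSeparabilityElement w) : Algebra.IsCentral k (A ⊗[k] B) where
  out c hc := by
    rw [← (hz.tensor hw).casimir_of_mem_center hc]
    clear hc
    induction c with
    | zero => simp
    | add c d hc hd => rw [map_add]; exact add_mem hc hd
    | tmul a b =>
      obtain ⟨r, hr⟩ := hz.exists_algebraMap_eq_casimir a
      obtain ⟨t, ht⟩ := hw.exists_algebraMap_eq_casimir b
      rw [casimir_tensorTensorTensorComm, ← hr, ← ht, Algebra.algebraMap_eq_smul_one r,
        ← smul_tmul', Algebra.algebraMap_eq_smul_one t, tmul_smul, smul_smul]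
      exact Subalgebra.smul_mem _ (one_mem _) _

theorem op : IsSeparabilityElement (opComm z) where
  mul'_eq_one := by
    rw [mul'_opComm, hz.mul'_eq_one, MulOpposite.op_one]
  tmul_one_mul a := by
    calc (a ⊗ₜ 1) * opComm z = opComm (1 ⊗ₜ a.unop) * opComm z := by simp
      _ = opComm (a.unop ⊗ₜ 1 * z) := by rw [← opComm_mul, ← hz.tmul_one_mul]
      _ = opComm z * (1 ⊗ₜ a) := by simp [opComm_mul]

theorem mapOfCompatibleSMul (K : Type*) [CommSemiring K] [Algebra k K] [Algebra K A]
    [IsScalarTower k K A] :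
    IsSeparabilityElement (Algebra.TensorProduct.mapOfCompatibleSMul K k k A A z) where
  mul'_eq_one := by
    have mul'_map : ∀ w : A ⊗[k] A, LinearMap.mul' K A
        (Algebra.TensorProduct.mapOfCompatibleSMul K k k A A w) = LinearMap.mul' k A w := by
      intro w
      induction w with
      | zero => simp
      | tmul s t => simp
      | add v w hv hw => simp only [map_add, hv, hw]
    rw [mul'_map, hz.mul'_eq_one]
  tmul_one_mul a := by
    simpa using congrArg (Algebra.TensorProduct.mapOfCompatibleSMul K k k A A) (hz.tmul_one_mul a)

end IsSeparabilityElement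

end Casimir

section Averaging

variable {k A V W : Type*} [CommSemiring k] [Semiring A] [Algebra k A]
  [AddCommMonoid V] [Module k V] [Module A V] [IsScalarTower k A V]
  [AddCommMonoid W] [Module k W] [Module A W] [IsScalarTower k A W]

/-- The average `v ↦ ∑ sᵢ • f (tᵢ • v)` of a `k`-linear map `f` over the tensor
`∑ sᵢ ⊗ₜ tᵢ`. -/
def average (f : V →ₗ[k] W) : A ⊗[k] A →ₗ[k] V →ₗ[k] W :=
  TensorProduct.lift <| LinearMap.mk₂ k
    (fun s t => Algebra.lsmul k k W s ∘ₗ f ∘ₗ Algebra.lsmul k k V t)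
    (fun _ _ _ => by ext; simp) (fun _ _ _ => by ext; simp)
    (fun _ _ _ => by ext; simp) (fun _ _ _ => by ext; simp [smul_algebra_smul_comm])

@[simp] theorem average_tmul (f : V →ₗ[k] W) (s t : A) (v : V) :
    average f (s ⊗ₜ[k] t) v = s • f (t • v) := rfl

theorem average_tmul_one_mul (f : V →ₗ[k] W) (a : A) (z : A ⊗[k] A) (v : V) :
    average f ((a ⊗ₜ 1) * z) v = a • average f z v := by
  induction z with
  | zero => simp
  | tmul s t => simp [mul_smul]
  | add z w hz hw => simp only [mul_add, map_add, LinearMap.add_apply, hz, hw, smul_add]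

theorem average_mul_one_tmul (f : V →ₗ[k] W) (a : A) (z : A ⊗[k] A) (v : V) :
    average f (z * (1 ⊗ₜ a)) v = average f z (a • v) := by
  induction z with
  | zero => simp
  | tmul s t => simp [mul_smul]
  | add z w hz hw => simp only [add_mul, map_add, LinearMap.add_apply, hz, hw]

end Averaging

section Semisimple

variable {k A V : Type*} [CommRing k] [Ring A] [Algebra k A]
  [AddCommGroup V] [Module k V] [Module A V] [IsScalarTower k A V]

theorem average_apply_of_mem {N : Submodule A V} {f : V →ₗ[k] N} (hf : ∀ v : N, f v = v)
    (z : A ⊗[k] A) (v : N) : average f z (v : V) = LinearMap.mul' k A z • v := by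
  induction z with
  | zero => simp
  | tmul s t => simpa [mul_smul] using congrArg (s • ·) (hf (t • v))
  | add z w hz hw => simp only [map_add, LinearMap.add_apply, hz, hw, add_smul]

theorem IsSeparabilityElement.isSemisimpleModule {z : A ⊗[k] A} (hz : IsSeparabilityElement z)
    [IsSemisimpleModule k V] : IsSemisimpleModule A V where
  exists_isCompl N := by
    obtain ⟨K, hK⟩ := exists_isCompl (N.restrictScalars k)
    let f : V →ₗ[k] N := Submodule.projectionOnto _ K hK
    have hf : ∀ v : N, f v = v := Submodule.projectionOnto_apply_left hK
    let F : V →ₗ[A] N := { average f z with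
      map_smul' := fun a v => by
        change average f z (a • v) = a • average f z v
        rw [← average_mul_one_tmul, ← hz.tmul_one_mul, average_tmul_one_mul] }
    refine ⟨LinearMap.ker F, LinearMap.isCompl_of_proj (f := F) fun v => ?_⟩
    refine (average_apply_of_mem hf z v).trans ?_
    rw [hz.mul'_eq_one, one_smul]

end Semisimple

section CentralSeparable

variable {k C : Type*} [CommRing k] [Ring C] [Algebra k C]

theorem isSemisimpleModule_of_smul_eq_zero {V : Type*} [AddCommGroup V] [Module k V] (m : Ideal k)
    [m.IsMaximal] (hV : ∀ c ∈ m, ∀ v : V, c • v = 0) : IsSemisimpleModule k V := by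
  have hT : Module.IsTorsionBySet k V m := fun v c => hV c c.2 v
  let _ := hT.module
  let _ := Ideal.Quotient.field m
  exact hT.isSemisimpleModule_iff.mp inferInstance

instance (m : Ideal k) : (m.map (algebraMap k C)).IsTwoSided where
  mul_mem_of_left {a} b ha := by
    induction ha using Submodule.span_induction with
    | mem x hx =>
      obtain ⟨c, hc, rfl⟩ := hx
      rw [Algebra.commutes]
      exact Ideal.mul_mem_left _ _ (Ideal.mem_map_of_mem _ hc)
    | zero => simp
    | add x y _ _ hx hy => rw [add_mul]; exact add_mem hx hy
    | smul x y _ hy => rw [smul_mul_assoc]; exact Submodule.smul_mem _ _ hy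

theorem IsSeparabilityElement.isSemisimpleModule_quotient {z : C ⊗[k] C}
    (hz : IsSeparabilityElement z) (m : Ideal k) [m.IsMaximal] :
    IsSemisimpleModule C (C ⧸ m.map (algebraMap k C)) := by
  have : IsSemisimpleModule k (C ⧸ m.map (algebraMap k C)) :=
    isSemisimpleModule_of_smul_eq_zero m fun c hc v => by
      obtain ⟨x, rfl⟩ := Submodule.Quotient.mk_surjective _ v
      rw [← Submodule.Quotient.mk_smul, Submodule.Quotient.mk_eq_zero, Algebra.smul_def]
      exact Ideal.mul_mem_right _ _ (Ideal.mem_map_of_mem _ hc)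
  exact hz.isSemisimpleModule

theorem exists_mul_sub_mem {L N : Ideal C} [IsSemisimpleModule C (C ⧸ L)] :
    ∃ e ∈ N, ∀ n ∈ N, n * e - n ∈ L := by
  obtain ⟨K, hK⟩ := exists_isCompl (Submodule.map L.mkQ N)
  obtain ⟨_, ⟨e, he, rfl⟩, κ, hκ, h1⟩ :=
    Submodule.mem_sup.mp (hK.sup_eq_top ▸ Submodule.mem_top (x := L.mkQ 1))
  refine ⟨e, he, fun n hn => ?_⟩
  have hnκ : n • κ = L.mkQ (n - n * e) := by
    rw [← eq_sub_iff_add_eq'] at h1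
    rw [h1, ← map_sub, ← map_smul, smul_eq_mul, mul_sub, mul_one]
  have : L.mkQ (n - n * e) ∈ (⊥ : Submodule C (C ⧸ L)) := by
    rw [← hK.inf_eq_bot]
    exact ⟨⟨_, sub_mem hn (N.mul_mem_left n he), rfl⟩, hnκ ▸ K.smul_mem n hκ⟩
  rw [Submodule.mem_bot, Submodule.mkQ_apply, Submodule.Quotient.mk_eq_zero] at this
  simpa using neg_mem this

theorem mulLeftRight_apply_mem (I : Ideal C) [I.IsTwoSided] (ξ : C ⊗[k] Cᵐᵒᵖ) {x : C}
    (hx : x ∈ I) : AlgHom.mulLeftRight k C ξ x ∈ I := by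
  induction ξ with
  | zero => simp
  | tmul a b =>
    rw [AlgHom.mulLeftRight_apply]
    exact I.mul_mem_right _ (I.mul_mem_left _ hx)
  | add ξ η hξ hη => rw [map_add]; exact add_mem hξ hη

theorem mul_casimir_sub_mem {L N : Ideal C} [L.IsTwoSided] [N.IsTwoSided] {e : C}
    (he : ∀ n ∈ N, n * e - n ∈ L) (z : C ⊗[k] C) {n : C} (hn : n ∈ N) :
    n * casimir z e - n * LinearMap.mul' k C z ∈ L := by
  induction z with
  | zero => simp
  | tmul s t =>
    have h := L.mul_mem_right t (he (n * s) (N.mul_mem_right s hn))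
    simpa only [casimir_tmul, LinearMap.mul'_apply, sub_mul, mul_assoc] using h
  | add z w hz hw =>
    simpa only [map_add, LinearMap.add_apply, mul_add, add_sub_add_comm] using add_mem hz hw

theorem IsSeparabilityElement.le_map_of_comap_le {z : C ⊗[k] C} (hz : IsSeparabilityElement z)
    [Algebra.IsCentral k C] {N : Ideal C} [N.IsTwoSided] {m : Ideal k} [m.IsMaximal]
    (h : N.comap (algebraMap k C) ≤ m) : N ≤ m.map (algebraMap k C) := by
  have := hz.isSemisimpleModule_quotient m
  obtain ⟨e, he, hNe⟩ := exists_mul_sub_mem (L := m.map (algebraMap k C)) (N := N)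
  obtain ⟨c, hc⟩ := hz.exists_algebraMap_eq_casimir e
  have hcm : c ∈ m := h <| by
    rw [Ideal.mem_comap, hc]
    exact mulLeftRight_apply_mem N _ he
  intro n hn
  have hmem := mul_casimir_sub_mem hNe z hn
  rw [hz.mul'_eq_one, mul_one, ← hc] at hmem
  exact (Submodule.sub_mem_iff_right _ (Ideal.mul_mem_left _ n (Ideal.mem_map_of_mem _ hcm))).mp
    hmem

end CentralSeparable

section Azumaya

variable {k A : Type*} [CommRing k] [Ring A] [Algebra k A] {z : A ⊗[k] A}

theorem IsSeparabilityElement.exists_mem_algebraMap_eq_casimir (hz : IsSeparabilityElement z)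
    [Algebra.IsCentral k A] {m : Ideal k} {ξ : A ⊗[k] Aᵐᵒᵖ}
    (hξ : ξ ∈ m.map (algebraMap k (A ⊗[k] Aᵐᵒᵖ))) (η : A ⊗[k] Aᵐᵒᵖ) (x : A) :
    ∃ c ∈ m, algebraMap k A c = casimir z (AlgHom.mulLeftRight k A (η * ξ) x) := by
  induction hξ using Submodule.span_induction generalizing η with
  | mem ξ hξ =>
    obtain ⟨c, hc, rfl⟩ := hξ
    obtain ⟨d, hd⟩ := hz.exists_algebraMap_eq_casimir (AlgHom.mulLeftRight k A η x)
    refine ⟨c * d, m.mul_mem_right _ hc, ?_⟩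
    rw [← Algebra.commutes, ← Algebra.smul_def, map_smul, LinearMap.smul_apply, map_smul,
      ← hd, Algebra.smul_def, map_mul]
  | zero => exact ⟨0, m.zero_mem, by simp⟩
  | add ξ ξ' _ _ h h' =>
    obtain ⟨c, hc, hcξ⟩ := h η
    obtain ⟨d, hd, hdξ⟩ := h' η
    refine ⟨c + d, m.add_mem hc hd, ?_⟩
    rw [mul_add, map_add, map_add, LinearMap.add_apply, map_add, hcξ, hdξ]
  | smul θ ξ _ h => simpa only [smul_eq_mul, mul_assoc] using h (η * θ)

theorem IsSeparabilityElement.one_mem_span_toEnveloping (hz : IsSeparabilityElement z)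
    [Algebra.IsCentral k A] [FaithfulSMul k A] :
    1 ∈ Ideal.span {toEnveloping z} * (⊤ : Ideal (A ⊗[k] Aᵐᵒᵖ)) := by
  -- As `Ideal` means left ideal, `N` is the two-sided ideal generated by `toEnveloping z`.
  set N := Ideal.span {toEnveloping z} * (⊤ : Ideal (A ⊗[k] Aᵐᵒᵖ))
  by_contra h1
  obtain ⟨m, hm, hNm⟩ := Ideal.exists_le_maximal (N.comap (algebraMap k (A ⊗[k] Aᵐᵒᵖ)))
    (fun h => h1 <| by simpa only [Ideal.mem_comap, map_one] using (Ideal.eq_top_iff_one _).mp h)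
  have := hz.isCentral_tensor hz.op
  have hζ : toEnveloping z ∈ N := by
    simpa using Ideal.mul_mem_mul (Ideal.mem_span_singleton_self (toEnveloping z))
      (Submodule.mem_top (x := 1))
  obtain ⟨c, hc, hcz⟩ := hz.exists_mem_algebraMap_eq_casimir
    ((hz.tensor hz.op).le_map_of_comap_le hNm hζ) 1 1
  have hc1 : c = 1 := FaithfulSMul.algebraMap_injective k A <| by
    rw [hcz, one_mul, mulLeftRight_toEnveloping, hz.casimir_one, hz.casimir_one, map_one]
  exact hm.ne_top ((Ideal.eq_top_iff_one m).mpr (hc1 ▸ hc))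

theorem exists_sum_casimir_mul {ξ : A ⊗[k] Aᵐᵒᵖ} [Algebra.IsCentral k A]
    (hz : IsSeparabilityElement z)
    (hξ : ξ ∈ Ideal.span {toEnveloping z} * (⊤ : Ideal (A ⊗[k] Aᵐᵒᵖ))) :
    ∃ (ι : Type) (_ : Fintype ι) (η : ι → A ⊗[k] Aᵐᵒᵖ) (a : ι → A), ∀ x,
      AlgHom.mulLeftRight k A ξ x =
        ∑ i, casimir z (AlgHom.mulLeftRight k A (η i) x) * a i := by
  induction hξ using Submodule.mul_induction_on' with
  | mem_mul_mem ξ hξ η _ =>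
    obtain ⟨θ, rfl⟩ := Ideal.mem_span_singleton'.mp hξ
    refine ⟨Unit, inferInstance, fun _ => η, fun _ => AlgHom.mulLeftRight k A θ 1, fun x => ?_⟩
    obtain ⟨c, hc⟩ := hz.exists_algebraMap_eq_casimir (AlgHom.mulLeftRight k A η x)
    rw [map_mul, map_mul, mulLeftRight_toEnveloping, Module.End.mul_apply, Module.End.mul_apply,
      Fintype.sum_unique, ← hc, ← Algebra.smul_def, Algebra.algebraMap_eq_smul_one, map_smul]
  | add ξ _ ξ' _ h h' =>
    obtain ⟨ι, _, η, a, h⟩ := h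
    obtain ⟨κ, _, θ, b, h'⟩ := h'
    exact ⟨ι ⊕ κ, inferInstance, Sum.elim η θ, Sum.elim a b, fun x => by
      simp [h, h']⟩

variable [Algebra.IsCentral k A] [FaithfulSMul k A]

namespace IsSeparabilityElement

variable (hz : IsSeparabilityElement z)
include hz

theorem exists_dualBasis :
    ∃ (ι : Type) (_ : Fintype ι) (η : ι → A ⊗[k] Aᵐᵒᵖ) (a : ι → A), ∀ x,
      x = ∑ i, casimir z (AlgHom.mulLeftRight k A (η i) x) * a i := by
  simpa using exists_sum_casimir_mul hz hz.one_mem_span_toEnveloping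

theorem module_finite : Module.Finite k A := by
  obtain ⟨ι, _, η, a, h⟩ := hz.exists_dualBasis
  choose c hc using fun i x => hz.exists_algebraMap_eq_casimir (AlgHom.mulLeftRight k A (η i) x)
  refine Module.Finite.of_surjective (Fintype.linearCombination k a) fun x => ⟨(c · x), ?_⟩
  simp only [Fintype.linearCombination_apply, Algebra.smul_def, hc, ← h x]

theorem restrictScalars_le_smul_top (I : Ideal A) [I.IsTwoSided] :
    I.restrictScalars k ≤ I.comap (algebraMap k A) • (⊤ : Submodule k A) := by
  intro x hx
  obtain ⟨ι, _, η, a, h⟩ := hz.exists_dualBasis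
  rw [h x]
  refine Submodule.sum_mem _ fun i _ => ?_
  obtain ⟨c, hc⟩ := hz.exists_algebraMap_eq_casimir (AlgHom.mulLeftRight k A (η i) x)
  rw [← hc, ← Algebra.smul_def]
  refine Submodule.smul_mem_smul ?_ trivial
  rw [Ideal.mem_comap, hc, ← mulLeftRight_toEnveloping]
  exact mulLeftRight_apply_mem I _ (mulLeftRight_apply_mem I _ hx)

end IsSeparabilityElement

end Azumaya

section Idempotent

variable {k A : Type*} [CommRing k] [Ring A] [Algebra k A]

theorem exists_sub_one_mem_of_le_mul {z : A ⊗[k] A} (hz : IsSeparabilityElement z)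
    [Algebra.IsCentral k A] [FaithfulSMul k A] (I : Ideal A) [I.IsTwoSided]
    (hfg : I.FG) (hI : I ≤ I * I) :
    ∃ c : k, algebraMap k A (c - 1) ∈ I ∧ ∀ x ∈ I, c • x = 0 := by
  have := hz.module_finite
  have hle : I.restrictScalars k ≤ I.comap (algebraMap k A) • I.restrictScalars k := by
    intro x hx
    refine Submodule.mul_induction_on (hI hx) (fun u hu v hv => ?_) fun _ _ => add_mem
    have huv : (LinearMap.mulRight k v) u ∈ (I.comap (algebraMap k A) • (⊤ : Submodule k A)).map
        (LinearMap.mulRight k v) :=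
      Submodule.mem_map_of_mem (hz.restrictScalars_le_smul_top I hu)
    rw [Submodule.map_smul''] at huv
    refine Submodule.smul_mono le_rfl ?_ huv
    rintro _ ⟨a, -, rfl⟩
    exact I.mul_mem_left a hv
  have hfg' : (I.restrictScalars k).FG := by
    have := Module.Finite.iff_fg.mpr hfg
    exact Module.Finite.iff_fg.mp (Module.Finite.trans (R := k) A I)
  exact Submodule.exists_sub_one_mem_and_smul_eq_zero_of_fg_of_le_smul _ _ hfg' hle

theorem IsSeparabilityElement.eq_top_of_le_mul {z : A ⊗[k] A} (hz : IsSeparabilityElement z)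
    (I : Ideal A) [I.IsTwoSided] (hfg : I.FG) (hI : I ≤ I * I)
    (hann : ∀ c ∈ Subring.center A, (∀ x ∈ I, c * x = 0) → c = 0) : I = ⊤ := by
  let _ : Algebra k (Subring.center A) := RingHom.toAlgebra <|
    (algebraMap k A).codRestrict _ fun r =>
      Subring.mem_center_iff.mpr fun a => (Algebra.commutes r a).symm
  have : IsScalarTower k (Subring.center A) A := .of_algebraMap_eq fun _ => rfl
  have : Algebra.IsCentral (Subring.center A) A := ⟨fun a ha =>
    ⟨⟨a, Subring.mem_center_iff.mpr (Subalgebra.mem_center_iff.mp ha)⟩, rfl⟩⟩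
  obtain ⟨c, hcI, hc⟩ := exists_sub_one_mem_of_le_mul
    (hz.mapOfCompatibleSMul (Subring.center A)) I hfg hI
  have hc0 : c = 0 := Subtype.ext (hann c c.2 hc)
  rw [Ideal.eq_top_iff_one]
  simpa [hc0] using neg_mem hcI

end Idempotent

section Corner

variable {k B S : Type*} [CommSemiring k] [Semiring B] [Algebra k B] [Semiring S] [Algebra k S]
  {ι : Type*} [Fintype ι] {e : S} {x y : ι → S}

theorem isSeparabilityElement_sum_of_corner {w : S ⊗[k] S} (hw : LinearMap.mul' k S w = e)
    (hew : (e ⊗ₜ 1) * w = w) (hwe : w * (1 ⊗ₜ e) = w)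
    (hcomm : ∀ s, ((e * s * e) ⊗ₜ 1) * w = w * (1 ⊗ₜ (e * s * e)))
    (hxy : ∑ i, x i * e * y i = 1) :
    IsSeparabilityElement (∑ i, (x i ⊗ₜ[k] 1) * (w * (1 ⊗ₜ[k] y i))) where
  mul'_eq_one := by
    simp only [map_sum, ← casimir_apply_one, casimir_tmul_one_mul, casimir_mul_one_tmul]
    simpa only [casimir_apply_one, hw, mul_assoc] using hxy
  tmul_one_mul a := by
    have hleft : ∀ i, ((a * x i) ⊗ₜ[k] 1) * w =
        ∑ l, (x l ⊗ₜ[k] 1) * (w * (1 ⊗ₜ (y l * a * x i * e))) := fun i => by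
      calc ((a * x i) ⊗ₜ[k] 1) * w
        _ = (((∑ l, x l * e * y l) * (a * x i)) ⊗ₜ 1) * ((e ⊗ₜ 1) * w) := by
            rw [hxy, one_mul, hew]
        _ = ∑ l, (x l ⊗ₜ 1) * (((e * (y l * a * x i) * e) ⊗ₜ 1) * w) := by
            simp only [← mul_assoc, Algebra.TensorProduct.tmul_mul_tmul, one_mul, Finset.sum_mul,
              sum_tmul]
        _ = ∑ l, (x l ⊗ₜ 1) * ((w * (1 ⊗ₜ e)) * (1 ⊗ₜ (y l * a * x i * e))) := by
            simp only [hcomm]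
            simp only [mul_assoc, Algebra.TensorProduct.tmul_mul_tmul, one_mul]
        _ = _ := by rw [hwe]
    calc (a ⊗ₜ 1) * ∑ i, (x i ⊗ₜ[k] 1) * (w * (1 ⊗ₜ[k] y i))
        = ∑ i, (((a * x i) ⊗ₜ[k] 1) * w) * (1 ⊗ₜ y i) := by
          simp only [Finset.mul_sum, ← mul_assoc, Algebra.TensorProduct.tmul_mul_tmul, one_mul]
      _ = ∑ l, (x l ⊗ₜ 1) * (w * (1 ⊗ₜ (y l * a * ∑ i, x i * e * y i))) := by
          simp only [hleft, Finset.sum_mul, Finset.mul_sum, mul_assoc, tmul_sum,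
            Algebra.TensorProduct.tmul_mul_tmul, one_mul]
          exact Finset.sum_comm
      _ = (∑ i, (x i ⊗ₜ[k] 1) * (w * (1 ⊗ₜ[k] y i))) * (1 ⊗ₜ a) := by
          rw [hxy]
          simp only [mul_one, Finset.sum_mul, mul_assoc, Algebra.TensorProduct.tmul_mul_tmul]

theorem map_tmul_one_mul (j : B →ₙₐ[k] S) (b : B) (z : B ⊗[k] B) :
    TensorProduct.map (j : B →ₗ[k] S) (j : B →ₗ[k] S) ((b ⊗ₜ 1) * z) =
      (j b ⊗ₜ 1) * TensorProduct.map (j : B →ₗ[k] S) (j : B →ₗ[k] S) z := by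
  induction z with
  | zero => simp
  | tmul s t => simp
  | add z w hz hw => simp only [mul_add, map_add, hz, hw]

theorem map_mul_one_tmul (j : B →ₙₐ[k] S) (b : B) (z : B ⊗[k] B) :
    TensorProduct.map (j : B →ₗ[k] S) (j : B →ₗ[k] S) (z * (1 ⊗ₜ b)) =
      TensorProduct.map (j : B →ₗ[k] S) (j : B →ₗ[k] S) z * (1 ⊗ₜ j b) := by
  induction z with
  | zero => simp
  | tmul s t => simp
  | add z w hz hw => simp only [add_mul, map_add, hz, hw]

theorem mul'_map (j : B →ₙₐ[k] S) (z : B ⊗[k] B) :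
    LinearMap.mul' k S (TensorProduct.map (j : B →ₗ[k] S) (j : B →ₗ[k] S) z) =
      j (LinearMap.mul' k B z) := by
  induction z with
  | zero => simp
  | tmul s t => simp
  | add z w hz hw => simp only [map_add, hz, hw]

theorem IsSeparabilityElement.of_corner {z : B ⊗[k] B} (hz : IsSeparabilityElement z)
    (j : B →ₙₐ[k] S) (hj : ∀ s, ∃ b, j 1 * s * j 1 = j b) (hxy : ∑ i, x i * j 1 * y i = 1) :
    ∃ w : S ⊗[k] S, IsSeparabilityElement w := by
  refine ⟨_, isSeparabilityElement_sum_of_corner (by rw [mul'_map j z, hz.mul'_eq_one]) ?_ ?_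
    (fun s => ?_) hxy⟩
  · rw [← map_tmul_one_mul, Algebra.TensorProduct.one_def.symm, one_mul]
  · rw [← map_mul_one_tmul, Algebra.TensorProduct.one_def.symm, mul_one]
  · obtain ⟨b, hb⟩ := hj s
    rw [hb, ← map_tmul_one_mul, hz.tmul_one_mul, map_mul_one_tmul]

end Corner

namespace GpdAction

variable {β : GpdAction Obj R}

section

omit [DecidableEq Obj] [∀ a b : Obj, Fintype (a ⟶ b)] [∀ a b : Obj, DecidableEq (a ⟶ b)]

theorem one_mul_act {a b : Obj} (g : a ⟶ b) (x : R) : β.one b * β.act g x = β.act g x := by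
  rw [β.one_central, β.act_mem]

theorem act_sum {ι : Type*} {a b : Obj} (g : a ⟶ b) (s : Finset ι) (f : ι → R) :
    β.act g (∑ i ∈ s, f i) = ∑ i ∈ s, β.act g (f i) :=
  map_sum (AddMonoidHom.mk' (β.act g) (β.act_add g)) f s

theorem eq_of_mul_one_eq {r r' : R} (h : ∀ e, r * β.one e = r' * β.one e) : r = r' := by
  rw [← mul_one r, ← mul_one r', ← β.sum_one, Finset.mul_sum, Finset.mul_sum]
  exact Finset.sum_congr rfl fun e _ => h e

end

omit [DecidableEq Obj] [∀ a b : Obj, DecidableEq (a ⟶ b)]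

theorem sum_mul_one {f : ∀ {b c : Obj}, (b ⟶ c) → R}
    (hf : ∀ {b c : Obj} (g : b ⟶ c), f g * β.one c = f g) (e : Obj) :
    (∑ c : Obj, ∑ b : Obj, ∑ g : b ⟶ c, f g) * β.one e = ∑ b : Obj, ∑ g : b ⟶ e, f g := by
  rw [Finset.sum_mul, Finset.sum_eq_single_of_mem e (Finset.mem_univ e)]
  · simp only [Finset.sum_mul, hf]
  · intro c _ hc
    simp only [Finset.sum_mul]
    refine Finset.sum_eq_zero fun b _ => Finset.sum_eq_zero fun g _ => ?_
    rw [← hf g, mul_assoc, β.one_orth c e hc, mul_zero]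

theorem sum_act_mem_inv (r : R) : ∑ c : Obj, ∑ b : Obj, ∑ g : b ⟶ c, β.act g r ∈ β.inv := by
  intro c d h _
  rw [← β.act_proj, sum_mul_one fun g => β.act_mem g r, sum_mul_one fun g => β.act_mem g r,
    act_sum]
  refine Finset.sum_congr rfl fun b _ => ?_
  rw [act_sum]
  refine Fintype.sum_equiv ⟨fun g : b ⟶ c => g ≫ h, fun g => g ≫ Groupoid.inv h,
    fun g => by simp [Groupoid.inv_eq_inv], fun g => by simp [Groupoid.inv_eq_inv]⟩ _ _ fun g => ?_
  exact (β.act_comp g h r).symm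

variable (β) in
/-- The trace map `r ↦ ∑ β_g(r 1_{g⁻¹})` over all morphisms `g`. -/
def trace : R →+ β.inv :=
  AddMonoidHom.mk' (fun r => ⟨∑ c : Obj, ∑ b : Obj, ∑ g : b ⟶ c, β.act g r, sum_act_mem_inv r⟩)
    fun r r' => Subtype.ext <| by simp [β.act_add, Finset.sum_add_distrib]

theorem coe_trace (r : R) :
    (β.trace r : R) = ∑ c : Obj, ∑ b : Obj, ∑ g : b ⟶ c, β.act g r := rfl

theorem trace_inv_mul (b : β.inv) (r : R) : β.trace (b * r) = b * β.trace r := by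
  have hact : ∀ {c d : Obj} (g : c ⟶ d), β.act g (b * r) = b * β.act g r := fun g => by
    rw [β.act_mul, b.2 g trivial, mul_assoc, one_mul_act]
  exact Subtype.ext <| by simp only [Subring.coe_mul, coe_trace, Finset.mul_sum, hact]

theorem trace_mul_inv (b : β.inv) (r : R) : β.trace (r * b) = β.trace r * b := by
  have hact : ∀ {c d : Obj} (g : c ⟶ d), β.act g (r * b) = β.act g r * b := fun g => by
    rw [β.act_mul, b.2 g trivial, ← β.one_central, ← mul_assoc, β.act_mem]
  exact Subtype.ext <| by simp only [Subring.coe_mul, coe_trace, Finset.sum_mul, hact]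

variable (β) in
/-- The image of the trace map, an ideal of the ring of invariants. -/
def traceIdeal : Ideal β.inv where
  __ := β.trace.range
  smul_mem' := by
    rintro b _ ⟨r, rfl⟩
    exact ⟨b * r, trace_inv_mul b r⟩

theorem mem_traceIdeal {b : β.inv} : b ∈ β.traceIdeal ↔ ∃ r, β.trace r = b := Iff.rfl

instance : β.traceIdeal.IsTwoSided where
  mul_mem_of_left b := by
    rintro ⟨r, rfl⟩
    exact ⟨r * b, trace_mul_inv b r⟩

end GpdAction

namespace SkewRing

variable {β : GpdAction Obj R}

section

omit [DecidableEq Obj] [∀ a b : Obj, Fintype (a ⟶ b)] [∀ a b : Obj, DecidableEq (a ⟶ b)]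

@[ext] theorem ext {f g : SkewRing β} (h : ∀ m, f.1 m = g.1 m) : f = g :=
  Subtype.ext (funext h)

variable (β) in
/-- The sum `∑ u_g` of all the canonical generators. -/
def sumU : SkewRing β := ⟨fun m => β.one m.2.1, fun _ => β.one_idem _⟩

theorem sumU_apply (m : Mor Obj) : (sumU β).1 m = β.one m.2.1 := rfl

end

theorem coe_sum {ι : Type*} (s : Finset ι) (f : ι → SkewRing β) (m : Mor Obj) :
    (∑ i ∈ s, f i).1 m = ∑ i ∈ s, (f i).1 m :=
  map_sum (AddMonoidHom.mk' (fun f : SkewRing β => f.1 m) (fun f g => coe_add f g m)) f s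

variable (β) in
/-- The embedding `diag` of the coefficient ring, as a ring homomorphism. -/
noncomputable def diagHom : R →+* SkewRing β where
  toFun := diag
  map_one' := rfl
  map_mul' x y := (diag_mul_diag x y).symm
  map_zero' := by
    ext m
    simp [diag_apply, coe_zero]
  map_add' x y := by
    ext m
    simp only [coe_add, diag_apply]
    split_ifs <;> simp [add_mul]

theorem diagHom_mul_apply (x : R) (f : SkewRing β) (m : Mor Obj) :
    (diagHom β x * f).1 m = x * f.1 m :=
  diag_mul_apply x f m

theorem mul_diagHom_apply (f : SkewRing β) (x : R) (m : Mor Obj) :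
    (f * diagHom β x).1 m = f.1 m * β.act m.2.2 x :=
  mul_diag_apply f x m

theorem exists_mul_sumU_eq (a : SkewRing β) : ∃ r, a * sumU β = diagHom β r * sumU β := by
  refine ⟨∑ c : Obj, ∑ b : Obj, ∑ g : b ⟶ c, a.1 ⟨b, c, g⟩, ext fun m => ?_⟩
  rw [diagHom_mul_apply, sumU_apply, GpdAction.sum_mul_one fun g => a.2 ⟨_, _, g⟩, coe_mul]
  simp only [sumU_apply, β.act_one, a.2 ⟨_, _, _⟩]

theorem sumU_mul_diagHom_mul_sumU (r : R) :
    sumU β * diagHom β r * sumU β = diagHom β (β.trace r) * sumU β := by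
  ext m
  rw [diagHom_mul_apply, sumU_apply, GpdAction.coe_trace,
    GpdAction.sum_mul_one fun g => β.act_mem g r, coe_mul]
  simp only [mul_diagHom_apply, sumU_apply, β.act_one, GpdAction.one_mul_act, β.act_mem]

theorem sumU_mul_diagHom_mul_sumU_of_trace_eq_one {c : R} (hc : β.trace c = 1) :
    sumU β * diagHom β c * sumU β = sumU β := by
  rw [sumU_mul_diagHom_mul_sumU, hc, Subring.coe_one, map_one, one_mul]

section Galois

variable {ι : Type*} [Fintype ι] {x y : ι → R}

theorem sum_diagHom_mul_sumU_mul_diagHom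
    (h1 : ∀ e : Obj, ∑ i, x i * β.act (𝟙 e) (y i * β.one e) = β.one e)
    (h0 : ∀ (a b : Obj) (g : a ⟶ b), ¬(∃ _ : a = b, HEq g (𝟙 a)) →
      ∑ i, x i * β.act g (y i * β.one a) = 0) :
    ∑ i, diagHom β (x i) * sumU β * diagHom β (y i) = 1 := by
  ext ⟨a, b, g⟩
  simp only [coe_sum, mul_diagHom_apply, diagHom_mul_apply, sumU_apply, mul_assoc,
    GpdAction.one_mul_act]
  change _ = (diag 1 : SkewRing β).1 _
  simp only [β.act_proj] at h1 h0
  by_cases hg : ∃ _ : a = b, HEq g (𝟙 a)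
  · obtain ⟨rfl, hg⟩ := hg
    simp [eq_of_heq hg, h1, diag_apply]
  · rw [h0 a b g hg, diag_apply]
    split_ifs with hab hid
    · obtain rfl : a = b := hab
      exact absurd ⟨rfl, heq_of_eq hid⟩ hg
    all_goals rfl

theorem sum_trace_mul_mul (h : ∑ i, diagHom β (x i) * sumU β * diagHom β (y i) = 1) (r : R) :
    ∑ i, (β.trace (r * x i) : R) * y i = r := by
  have hsum : ∑ i, diagHom β (β.trace (r * x i)) * sumU β * diagHom β (y i) =
      sumU β * diagHom β r := by
    simp only [← sumU_mul_diagHom_mul_sumU, map_mul]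
    simpa only [Finset.mul_sum, mul_assoc, mul_one] using
      congrArg (sumU β * diagHom β r * ·) h
  refine GpdAction.eq_of_mul_one_eq (β := β) fun e => ?_
  have he := congrArg (fun f : SkewRing β => f.1 ⟨e, e, 𝟙 e⟩) hsum
  simpa only [coe_sum, mul_diagHom_apply, diagHom_mul_apply, sumU_apply, β.act_id, mul_assoc,
    β.one_central e, β.one_idem, Finset.sum_mul] using he

theorem trace_eq_sum (h : ∑ i, diagHom β (x i) * sumU β * diagHom β (y i) = 1) (r : R) :
    β.trace r = ∑ i, β.trace (r * x i) * β.trace (y i) := by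
  conv_lhs => rw [← sum_trace_mul_mul h r, map_sum]
  exact Finset.sum_congr rfl fun i _ => GpdAction.trace_inv_mul _ _

theorem exists_trace_eq_one {k : Type*} [CommRing k] [Algebra k β.inv]
    {z : β.inv ⊗[k] β.inv} (hz : IsSeparabilityElement z)
    (h : ∑ i, diagHom β (x i) * sumU β * diagHom β (y i) = 1) : ∃ c, β.trace c = 1 := by
  suffices β.traceIdeal = ⊤ from (Ideal.eq_top_iff_one _).mp this
  refine hz.eq_top_of_le_mul _ ?_ ?_ ?_
  · refine Submodule.fg_def.mpr ⟨_, Set.finite_range fun i => β.trace (y i), le_antisymm ?_ ?_⟩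
    · rw [Submodule.span_le, Set.range_subset_iff]
      exact fun i => ⟨y i, rfl⟩
    · intro b hb
      obtain ⟨r, rfl⟩ := GpdAction.mem_traceIdeal.mp hb
      rw [trace_eq_sum h r]
      exact Submodule.sum_mem _ fun i _ => Ideal.mul_mem_left _ _ <|
        Submodule.subset_span ⟨i, rfl⟩
  · intro b hb
    obtain ⟨r, rfl⟩ := GpdAction.mem_traceIdeal.mp hb
    rw [trace_eq_sum h r]
    exact Submodule.sum_mem _ fun i _ => Ideal.mul_mem_mul ⟨_, rfl⟩ ⟨_, rfl⟩
  · intro c _ hc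
    refine Subtype.ext ?_
    rw [← sum_trace_mul_mul h c]
    refine Finset.sum_eq_zero fun i _ => ?_
    rw [GpdAction.trace_inv_mul, hc _ ⟨x i, rfl⟩, Subring.coe_zero, zero_mul]

end Galois

section CornerHom

variable {k : Type*} [CommSemiring k] [Algebra k β.inv] [Algebra k (SkewRing β)]
  (hk : ∀ a : k, algebraMap k (SkewRing β) a = diag (algebraMap k β.inv a : R))
  {c : R} (hc : β.trace c = 1)

/-- For `c` of trace `1`, the (non-unital) isomorphism `b ↦ b (∑ u_g) c` of the ring of invariants
with the corner of `R ⋆_β 𝒢` at the idempotent `(∑ u_g) c`. -/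
noncomputable def cornerHom : β.inv →ₙₐ[k] SkewRing β where
  toFun b := diagHom β (b : R) * sumU β * diagHom β c
  map_zero' := by simp
  map_add' := by simp [add_mul]
  map_smul' a b := by
    rw [Algebra.smul_def, Algebra.smul_def, Subring.coe_mul, map_mul, hk]
    simp only [mul_assoc]
    rfl
  map_mul' b b' := by
    symm
    calc _ = diagHom β b * (sumU β * diagHom β (c * b') * sumU β) * diagHom β c := by
          simp only [map_mul, mul_assoc]
      _ = _ := by
          rw [sumU_mul_diagHom_mul_sumU, GpdAction.trace_mul_inv, hc, one_mul, Subring.coe_mul,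
            map_mul]
          simp only [mul_assoc]

theorem cornerHom_apply (b : β.inv) :
    cornerHom hk hc b = diagHom β (b : R) * sumU β * diagHom β c := rfl

theorem cornerHom_one : cornerHom hk hc 1 = sumU β * diagHom β c := by
  simp [cornerHom_apply]

theorem exists_cornerHom_one_mul_mul_eq (a : SkewRing β) :
    ∃ b, cornerHom hk hc 1 * a * cornerHom hk hc 1 = cornerHom hk hc b := by
  obtain ⟨r, hr⟩ := exists_mul_sumU_eq (diagHom β c * a)
  refine ⟨β.trace r, ?_⟩
  calc _ = sumU β * (diagHom β c * a * sumU β) * diagHom β c := by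
        simp only [cornerHom_one, mul_assoc]
    _ = sumU β * diagHom β r * sumU β * diagHom β c := by rw [hr]; simp only [mul_assoc]
    _ = _ := by rw [sumU_mul_diagHom_mul_sumU, cornerHom_apply]

theorem sum_mul_cornerHom_one_mul {ι : Type*} [Fintype ι] {x y : ι → R}
    (h : ∑ i, diagHom β (x i) * sumU β * diagHom β (y i) = 1) :
    ∑ i, diagHom β (x i) * cornerHom hk hc 1 * (sumU β * diagHom β (y i)) = 1 := by
  rw [← h]
  refine Finset.sum_congr rfl fun i _ => ?_
  calc _ = diagHom β (x i) * (sumU β * diagHom β c * sumU β) * diagHom β (y i) := by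
        simp only [cornerHom_one, mul_assoc]
    _ = _ := by rw [sumU_mul_diagHom_mul_sumU_of_trace_eq_one hc]

end CornerHom

end SkewRing

theorem isSepExt_iff {k A : Type} [CommRing k] [Ring A] [Algebra k A] :
    IsSepExt k A ↔ ∃ z : A ⊗[k] A, IsSeparabilityElement z :=
  exists_congr fun _ => ⟨fun h => ⟨h.1, h.2⟩, fun h => ⟨h.1, h.2⟩⟩

theorem skewRing_sepExt_of_galois_general {k : Type} [CommRing k] {β : GpdAction Obj R}
    [Algebra k β.inv] [Algebra k (SkewRing β)]
    (hk : ∀ a : k, algebraMap k (SkewRing β) a = SkewRing.diag (algebraMap k β.inv a : R))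
    (hGal : β.IsGaloisExt) (hsep : IsSepExt k β.inv) : IsSepExt k (SkewRing β) := by
  rw [isSepExt_iff] at hsep ⊢
  obtain ⟨z, hz⟩ := hsep
  obtain ⟨n, x, y, h1, h0⟩ := hGal
  have hxy := SkewRing.sum_diagHom_mul_sumU_mul_diagHom h1 h0
  obtain ⟨c, hc⟩ := SkewRing.exists_trace_eq_one hz hxy
  exact hz.of_corner (SkewRing.cornerHom hk hc) (SkewRing.exists_cornerHom_one_mul_mul_eq hk hc)
    (SkewRing.sum_mul_cornerHom_one_mul hk hc hxy)

/-- if `R` is a `β`-Galois extension of `R^β` and `R^β` is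
separable over `C(R)^β`, then the skew groupoid ring `R ⋆_β 𝒢` is separable
over `C(R)^β`. -/
theorem skewRing_sepExt_of_galois
    (β : GpdAction Obj R) (hGal : β.IsGaloisExt)
    (hsep : SepOver R β.centerInv β.inv) :
    letI : CommRing ↥β.centerInv := commRingOfCentral R β.centerInv
      (fun x hx r => ((Subring.mem_center_iff.mp (Subring.mem_inf.mp hx).1) r).symm)
    letI : Algebra ↥β.centerInv (SkewRing β) :=
      RingHom.toAlgebra' (iotaC β) (fun c x => iotaC_commute β c x)
    IsSepExt ↥β.centerInv (SkewRing β) := by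
  obtain ⟨hc, hle, hs⟩ := hsep
  let _ : CommRing β.centerInv := commRingOfCentral R β.centerInv hc
  let _ : Algebra β.centerInv β.inv := RingHom.toAlgebra' (Subring.inclusion hle)
    fun c x => Subtype.ext (hc c.1 c.2 x.1)
  let _ : Algebra β.centerInv (SkewRing β) := RingHom.toAlgebra' (iotaC β) (iotaC_commute β)
  exact skewRing_sepExt_of_galois_general (fun _ => rfl) hGal hs

end Stmt4
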